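/- Let R be a brace algebra and let μ : T(R^𝒯) → T(R) be the map defined by μ(1)=1, μ(t_1⋯t_n)=μ(t_1)⋯μ(t_n), and μ(B_+^x(s_1⋯s_q)) = M_{1q}(x; μ(s_1)⋯μ(s_q)). Then μ intertwines the Loday–Ronco products: μ(f_1 ⋆ f_2) = μ(f_1) ⋆ μ(f_2) for all decorated forests f_1, f_2 ∈ T(R^𝒯), where on the left ⋆ is the product of T(R^𝒯) induced by the recursive brace operation on decorated trees and on the right ⋆ is the product of T(R) induced by the brace structure of R. -/

import Mathlib

/-! Setup: a brace algebra `R`, the Loday–Ronco product on `T(R)` (realized in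
the tensor algebra), `R`-decorated planar rooted trees with their recursive
brace operation and the induced Loday–Ronco product on decorated forests, and
the maps `ι : T(R) → T(R^𝒯)` and `μ : T(R^𝒯) → T(R)`. -/

/-- Planar rooted trees with vertices decorated by elements of `R`. -/
inductive PTree (R : Type*) : Type _
  | node : R → List (PTree R) → PTree R

section

variable (K : Type*) [Field K] {R : Type*} [AddCommGroup R] [Module K R]

/-- All splittings of a list into a prefix and a suffix. -/
def splits {α : Type*} (l : List α) : List (List α × List α) :=
  (List.range (l.length + 1)).map fun i => (l.take i, l.drop i)

/-- All factorizations of a list into `k` (possibly empty) consecutive factors. -/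
def splitsN {α : Type*} : ℕ → List α → List (List (List α))
  | 0, l => if l.isEmpty then [[]] else []
  | k + 1, l => (splits l).flatMap fun p => (splitsN k p.2).map fun r => p.1 :: r

variable {K}

/-- The word on the right-hand side of the brace relation, for a factorization
of `zs` into `2n+1` consecutive (possibly empty) blocks braced into `ys`. -/
def braceRHSword (M : R → List R → R) : List (List R) → List R → List R
  | [P], [] => P
  | P :: B :: rest, y :: ys => P ++ M y B :: braceRHSword M rest ys
  | _, _ => []

/-- The brace relation for operations `{x; y₁,…,y_q} = M(x; y₁⋯y_q)`. -/
def BraceRel (M : R → List R → R) : Prop :=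
  ∀ (x : R) (ys zs : List R),
    M (M x ys) zs =
      ((splitsN (2 * ys.length + 1) zs).map fun Zs => M x (braceRHSword M Zs ys)).sum

/-- The extension `M(X;Y)` of the brace operations to pairs of words. -/
def Mext (M : R → List R → R) : List R → List R → R
  | [], [] => 0
  | [], [y] => y
  | [], _ :: _ :: _ => 0
  | [x], ys => M x ys
  | _ :: _ :: _, _ => 0

/-- The list of words (with multiplicities) whose formal sum is the Loday–Ronco
product `X ⋆ Y` in `T(R)` (with `1 ⋆ 1 = 1`; terms with `k > |X| + |Y|` vanish). -/
def starWords (M : R → List R → R) : List R → List R → List (List R)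
  | [], [] => [[]]
  | X, Y =>
    (List.range (X.length + Y.length)).flatMap fun k =>
      (splitsN (k + 1) X).flatMap fun Xs =>
        (splitsN (k + 1) Y).map fun Ys => List.zipWith (Mext M) Xs Ys

variable (K)

/-- A word `x₁⋯xₙ ∈ R^{⊗n} ⊂ T(R)`, realized in the tensor algebra. -/
def wd (l : List R) : TensorAlgebra K R :=
  (l.map fun x => TensorAlgebra.ι K x).prod

/-- The Loday–Ronco product `⋆` on `T(R)`, evaluated on two words. -/
def starW (M : R → List R → R) (X Y : List R) : TensorAlgebra K R :=
  ((starWords M X Y).map (wd K)).sum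

/-- Decorated forests: words of decorated trees. -/
abbrev Forest (R : Type*) := List (PTree R)

/-- The space `R^𝒯` spanned by the decorated trees. -/
abbrev TreeMod (R : Type*) := PTree R →₀ K

/-- The space `T(R^𝒯)` of decorated forests. -/
abbrev ForestMod (R : Type*) := Forest R →₀ K

variable {K}

/-- `B₊ˣ` : grafting of a decorated forest onto a new root decorated by `x`. -/
def Bplus (x : R) (f : Forest R) : PTree R := PTree.node x f

/-- The element of `T(R^𝒯)` obtained from a word whose letters are linear
combinations of decorated trees, expanding multilinearly. -/
noncomputable def wordOf : List (TreeMod K R) → ForestMod K R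
  | [] => Finsupp.single ([] : Forest R) 1
  | a :: rest => a.sum fun t c => c • Finsupp.mapDomain (List.cons t) (wordOf rest)

/-- Extension of the tree brace operation to pairs of forests. -/
noncomputable def MextF (Mh : PTree R → Forest R → TreeMod K R) :
    Forest R → Forest R → TreeMod K R
  | [], [] => 0
  | [], [s] => Finsupp.single s 1
  | [], _ :: _ :: _ => 0
  | [t], ys => Mh t ys
  | _ :: _ :: _, _ => 0

/-- The Loday–Ronco product on decorated forests built from a brace operation
`Mh` on decorated trees. -/
noncomputable def starRHS (Mh : PTree R → Forest R → TreeMod K R) :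
    Forest R → Forest R → ForestMod K R
  | [], [] => Finsupp.single ([] : Forest R) 1
  | X, Y =>
    ((List.range (X.length + Y.length)).flatMap fun k =>
      (splitsN (k + 1) X).flatMap fun Xs =>
        (splitsN (k + 1) Y).map fun Ys =>
          wordOf (List.zipWith (MextF Mh) Xs Ys)).sum

/-- `Mh` and `star` satisfy the defining recursion of the brace operation on
decorated trees, `M(B₊ˣ(f₁); f₂) = B₊ˣ(f₁ ⋆ f₂)`, where `⋆` is the Loday–Ronco
product on decorated forests built from `Mh`. -/
def IsTreeBrace (Mh : PTree R → Forest R → TreeMod K R)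
    (star : Forest R → Forest R → ForestMod K R) : Prop :=
  (∀ (x : R) (f₁ f₂ : Forest R),
      Mh (Bplus x f₁) f₂ = Finsupp.mapDomain (Bplus x) (star f₁ f₂)) ∧
  (∀ X Y : Forest R, star X Y = starRHS Mh X Y)

/-- The map `μ` on decorated trees: `μ(B₊ˣ(s₁⋯s_q)) = M_{1q}(x; μ(s₁)⋯μ(s_q))`. -/
def muT (M : R → List R → R) : PTree R → R
  | PTree.node x ts => M x (ts.attach.map fun s => muT M s.1)
decreasing_by
  have := List.sizeOf_lt_of_mem s.2
  simp only [PTree.node.sizeOf_spec]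
  omega

/-- The map `ι : T(R) → T(R^𝒯)`, `ι(x₁⋯xₙ) = B₊^{x₁}(1)⋯B₊^{xₙ}(1)`, on words. -/
def iotaW (xs : List R) : Forest R := xs.map fun x => PTree.node x []

end

/-!
The Loday–Ronco product is functorial: if a linear map sends the brace of trees to the brace of `S`
on all trees of `X`, then its extension to words sends `X ⋆ Y` to the product of the images. So it
suffices that `μ` preserves braces, `μ(M(t; f)) = {μ(t); μ(f)}`, which goes by induction on `t`.
For `t = B₊ˣ(s₁⋯s_q)` the left side is `{x; -}` applied to `μ(s₁⋯s_q ⋆ f)`, which by the induction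
hypothesis for the `sᵢ` is `{x; -}` applied to `μ(s₁)⋯μ(s_q) ⋆ μ(f)`. Discarding the vanishing
factors `M(1;1)`, a product `Y ⋆ Z` is the sum of the words
`Z⁰ {y₁; Z¹} Z² ⋯ {y_q; Z^{2q-1}} Z^{2q}` over all `Z = Z⁰⋯Z^{2q}`, so the brace relation
identifies the result with `{{x; μ(s₁)⋯μ(s_q)}; μ(f)}`.

A linear map `T(R) → V` is handled through the function `F` it induces on words; pairing with
an arbitrary such `F` replaces identities between formal sums of words by identities of sums in `V`.
-/

theorem sum_map_flatMap {α β V : Type*} [AddMonoid V] (l : List α) (g : α → List β)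
    (f : β → V) : ((l.flatMap g).map f).sum = (l.map fun a => ((g a).map f).sum).sum := by
  rw [List.map_flatMap, List.flatMap, List.sum_flatten, List.map_map]
  rfl

theorem sum_map_sum_map_comm {α β V : Type*} [AddCommMonoid V] (l : List α) (m : List β)
    (f : α → β → V) :
    (l.map fun a => (m.map fun b => f a b).sum).sum =
      (m.map fun b => (l.map fun a => f a b).sum).sum := by
  simpa using Multiset.sum_map_sum_map (l : Multiset α) (m : Multiset β) (f := f)

section Splits

variable {α β : Type*}

theorem splits_nil : splits ([] : List α) = [([], [])] := by
  simp [splits]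

theorem splits_cons (a : α) (l : List α) :
    splits (a :: l) = ([], a :: l) :: (splits l).map fun p => (a :: p.1, p.2) := by
  simp [splits, List.range_succ_eq_map, List.map_map, Function.comp_def]

theorem splits_map (f : α → β) (l : List α) :
    splits (l.map f) = (splits l).map fun p => (p.1.map f, p.2.map f) := by
  simp [splits, Function.comp_def]

theorem append_eq_of_mem_splits {l : List α} {p : List α × List α} (hp : p ∈ splits l) :
    p.1 ++ p.2 = l := by
  obtain ⟨i, -, rfl⟩ := List.mem_map.1 hp
  exact List.take_append_drop i l

theorem splitsN_one (l : List α) : splitsN 1 l = [[l]] := by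
  have hproper : ∀ i ∈ List.range l.length,
      (splitsN 0 (l.drop i)).map (l.take i :: ·) = [] := by
    intro i hi
    simpa [splitsN] using hi
  simp only [splitsN, splits, List.range_succ, List.map_append, List.flatMap_append,
    List.flatMap_map] at hproper ⊢
  rw [List.flatMap_eq_nil_iff.2 hproper]
  simp

theorem splitsN_map (f : α → β) (k : ℕ) (l : List α) :
    splitsN k (l.map f) = (splitsN k l).map (List.map (List.map f)) := by
  induction k generalizing l with
  | zero => cases l <;> simp [splitsN]
  | succ k ih =>
    simp [splitsN, splits_map, List.flatMap_map, List.map_flatMap, ih, Function.comp_def]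

theorem flatten_eq_of_mem_splitsN {k : ℕ} {l : List α} {Xs : List (List α)}
    (hXs : Xs ∈ splitsN k l) : Xs.flatten = l := by
  induction k generalizing l Xs with
  | zero => cases l <;> simp_all [splitsN]
  | succ k ih =>
    simp only [splitsN, List.mem_flatMap, List.mem_map] at hXs
    obtain ⟨p, hp, Ys, hYs, rfl⟩ := hXs
    rw [List.flatten_cons, ih hYs, append_eq_of_mem_splits hp]

end Splits

section BraceSum

variable {R V : Type*} [AddCommMonoid V]

/-- The linear extension of `F` to `T(R)`, evaluated on the sum of words
`Z⁰ {y₁; Z¹} Z² ⋯ {yₙ; Z^{2n-1}} Z^{2n}` over all factorizations `zs = Z⁰⋯Z^{2n}`.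
For `F = {x; -}` this is the right-hand side of the brace relation. -/
def braceSum (M : R → List R → R) (F : List R → V) (ys zs : List R) : V :=
  ((splitsN (2 * ys.length + 1) zs).map fun Zs => F (braceRHSword M Zs ys)).sum

variable (M : R → List R → R)

theorem braceSum_nil (F : List R → V) (zs : List R) : braceSum M F [] zs = F zs := by
  simp [braceSum, splitsN_one, braceRHSword]

theorem braceSum_cons (F : List R → V) (y : R) (ys zs : List R) :
    braceSum M F (y :: ys) zs =
      ((splits zs).map fun p => ((splits p.2).map fun q =>
        braceSum M (fun w => F (p.1 ++ M y q.1 :: w)) ys q.2).sum).sum := by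
  have hlen : 2 * (y :: ys).length + 1 = 2 * ys.length + 1 + 1 + 1 := by
    rw [List.length_cons]; ring
  simp only [braceSum, hlen]
  generalize 2 * ys.length + 1 = n
  simp only [splitsN, sum_map_flatMap, List.map_map, Function.comp_def, braceRHSword]

theorem braceSum_cons_cons (F : List R → V) (y : R) (ys : List R) (z : R) (zs : List R) :
    braceSum M F (y :: ys) (z :: zs) =
      braceSum M (fun w => F (z :: w)) (y :: ys) zs +
        ((splits (z :: zs)).map fun q =>
          braceSum M (fun w => F (M y q.1 :: w)) ys q.2).sum := by
  rw [braceSum_cons, splits_cons z zs, List.map_cons, List.sum_cons, add_comm, List.map_map,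
    braceSum_cons]
  simp [splits_cons, Function.comp_def]

theorem braceSum_of_forall_eq_zero {F : List R → V} (hF : ∀ w, F w = 0) (X Y : List R) :
    braceSum M F X Y = 0 := by
  simp [braceSum, hF]

end BraceSum

section StarSum

variable {R V : Type*} [AddCommGroup R] [AddCommMonoid V]

/-- The linear extension of `F` to `T(R)`, evaluated on the part of the Loday–Ronco product `X ⋆ Y`
coming from factorizations of `X` and `Y` into `k` factors. -/
def factorSum (M : R → List R → R) (k : ℕ) (F : List R → V) (X Y : List R) : V :=
  ((splitsN k X).map fun Xs =>
    ((splitsN k Y).map fun Ys => F (List.zipWith (Mext M) Xs Ys)).sum).sum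

/-- The sum of `G (M(X¹;Y¹)) X' Y'` over all splittings `X = X¹X'` and `Y = Y¹Y'`: the choice of the
first pair of factors in a Loday–Ronco product. -/
def splitSum (M : R → List R → R) (G : R → List R → List R → V) (X Y : List R) : V :=
  ((splits X).map fun p => ((splits Y).map fun q => G (Mext M p.1 q.1) p.2 q.2).sum).sum

variable (M : R → List R → R)

-- Two empty factors contribute nothing because `M(1;1) = 0`, so only values on strictly
-- shorter pairs of words matter and induction on the total length applies.
theorem splitSum_congr {G H : R → List R → List R → V} (hG : ∀ X Y, G 0 X Y = 0)
    (hH : ∀ X Y, H 0 X Y = 0) {X Y : List R}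
    (h : ∀ a X' Y', X'.length + Y'.length < X.length + Y.length → G a X' Y' = H a X' Y') :
    splitSum M G X Y = splitSum M H X Y := by
  unfold splitSum
  refine congrArg _ (List.map_congr_left fun p hp => congrArg _ (List.map_congr_left ?_))
  intro q hq
  have hX := congrArg List.length (append_eq_of_mem_splits hp)
  have hY := congrArg List.length (append_eq_of_mem_splits hq)
  rw [List.length_append] at hX hY
  by_cases hempty : p.1 = [] ∧ q.1 = []
  · rw [hempty.1, hempty.2, Mext, hG, hH]
  · have hpos : 0 < p.1.length + q.1.length := by
      by_contra! hlen
      exact hempty (by simpa using hlen)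
    exact h _ _ _ (by omega)

theorem splitSum_list_sum {ι : Type*} (l : List ι) (G : ι → R → List R → List R → V)
    (X Y : List R) :
    (l.map fun i => splitSum M (G i) X Y).sum =
      splitSum M (fun a X' Y' => (l.map fun i => G i a X' Y').sum) X Y := by
  simp only [splitSum]
  rw [sum_map_sum_map_comm]
  simp only [sum_map_sum_map_comm l]

section FirstFactor

variable {G : R → List R → List R → V}

theorem splitSum_nil_nil : splitSum M G [] [] = G 0 [] [] := by
  simp [splitSum, splits_nil, Mext]

theorem sum_splits_Mext_nil_cons (hG : ∀ X Y, G 0 X Y = 0) (X : List R) (y : R) (Y : List R) :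
    ((splits (y :: Y)).map fun q => G (Mext M [] q.1) X q.2).sum = G y X Y := by
  cases Y <;> simp [splits_cons, splits_nil, Mext, hG, Function.comp_def]

theorem splitSum_nil_cons (hG : ∀ X Y, G 0 X Y = 0) (y : R) (Y : List R) :
    splitSum M G [] (y :: Y) = G y [] Y := by
  simpa [splitSum, splits_nil] using sum_splits_Mext_nil_cons M hG [] y Y

theorem splitSum_cons (hG : ∀ X Y, G 0 X Y = 0) (x : R) (X Y : List R) :
    splitSum M G (x :: X) Y =
      ((splits Y).map fun q => G (Mext M [] q.1) (x :: X) q.2).sum +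
        ((splits Y).map fun q => G (M x q.1) X q.2).sum := by
  cases X <;> simp [splitSum, splits_cons, splits_nil, Mext, hG, Function.comp_def]

end FirstFactor

theorem factorSum_succ (k : ℕ) (F : List R → V) (X Y : List R) :
    factorSum M (k + 1) F X Y =
      splitSum M (fun a => factorSum M k fun w => F (a :: w)) X Y := by
  simp only [factorSum, splitSum, splitsN, sum_map_flatMap, List.map_map, Function.comp_def,
    List.zipWith_cons_cons]
  refine congrArg _ (List.map_congr_left fun p _ => ?_)
  rw [sum_map_sum_map_comm]

theorem factorSum_zero_of_ne_nil (F : List R → V) {X Y : List R} (h : ¬(X = [] ∧ Y = [])) :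
    factorSum M 0 F X Y = 0 := by
  cases X <;> cases Y <;> simp_all [factorSum, splitsN]

theorem factorSum_of_forall_eq_zero (k : ℕ) {F : List R → V} (hF : ∀ w, F w = 0)
    (X Y : List R) : factorSum M k F X Y = 0 := by
  simp [factorSum, hF]

theorem braceSum_eq_splitSum {F : List R → V} (hF : ∀ w, 0 ∈ w → F w = 0) {X Y : List R}
    (h : ¬(X = [] ∧ Y = [])) :
    braceSum M F X Y =
      splitSum M (fun a => braceSum M fun w => F (a :: w)) X Y := by
  have hzero : ∀ X' Y', braceSum M (fun w => F (0 :: w)) X' Y' = 0 :=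
    braceSum_of_forall_eq_zero M fun w => hF _ List.mem_cons_self
  rcases X with _ | ⟨x, X⟩
  · rcases Y with _ | ⟨y, Y⟩
    · exact absurd ⟨rfl, rfl⟩ h
    · rw [splitSum_nil_cons M hzero, braceSum_nil, braceSum_nil]
  · rw [splitSum_cons M hzero]
    rcases Y with _ | ⟨y, Y⟩
    · rw [braceSum_cons]
      simp [splits_nil, Mext, hzero]
    · rw [sum_splits_Mext_nil_cons M (G := fun a => braceSum M fun w => F (a :: w)) hzero,
        braceSum_cons_cons]

theorem sum_range_factorSum {F : List R → V} (hF : ∀ w, 0 ∈ w → F w = 0) {X Y : List R} {n : ℕ}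
    (hn : X.length + Y.length < n) :
    ((List.range n).map fun k => factorSum M k F X Y).sum = braceSum M F X Y := by
  induction n generalizing F X Y with
  | zero => omega
  | succ n ih =>
    have hF_cons : ∀ a w, 0 ∈ w → F (a :: w) = 0 := fun a w hw => hF _ (List.mem_cons_of_mem a hw)
    have hF_zero : ∀ w, F (0 :: w) = 0 := fun w => hF _ List.mem_cons_self
    rw [List.range_succ_eq_map, List.map_cons, List.sum_cons, List.map_map]
    simp only [Function.comp_def, Nat.succ_eq_add_one, factorSum_succ]
    by_cases h : X = [] ∧ Y = []
    · obtain ⟨rfl, rfl⟩ := h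
      simp only [splitSum_nil_nil, factorSum_of_forall_eq_zero M _ hF_zero, braceSum_nil]
      simp [factorSum, splitsN]
    · rw [factorSum_zero_of_ne_nil M F h, zero_add, splitSum_list_sum, braceSum_eq_splitSum M hF h]
      refine splitSum_congr M (fun X' Y' => ?_) (braceSum_of_forall_eq_zero M hF_zero)
        fun a X' Y' hlt => ih (hF_cons a) (by omega)
      simp [factorSum_of_forall_eq_zero M _ hF_zero]

theorem sum_starWords_eq_sum_range_factorSum (F : List R → V) (X Y : List R) :
    ((starWords M X Y).map F).sum =
      ((List.range (X.length + Y.length + 1)).map fun k => factorSum M k F X Y).sum := by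
  by_cases h : X = [] ∧ Y = []
  · obtain ⟨rfl, rfl⟩ := h
    simp [starWords, factorSum, splitsN]
  · rw [List.range_succ_eq_map, List.map_cons, List.sum_cons, factorSum_zero_of_ne_nil M F h,
      zero_add, starWords.eq_2 _ _ _ fun hX hY => h ⟨hX, hY⟩]
    simp only [sum_map_flatMap, List.map_map, Function.comp_def, factorSum]

theorem sum_starWords_eq_braceSum {F : List R → V} (hF : ∀ w, 0 ∈ w → F w = 0)
    (X Y : List R) : ((starWords M X Y).map F).sum = braceSum M F X Y := by
  rw [sum_starWords_eq_sum_range_factorSum, sum_range_factorSum M hF (Nat.lt_succ_self _)]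

end StarSum

/-- `F` is multilinear on the words of each length, i.e. it extends to a linear map on `T(R)`. -/
structure IsWordMultilinear (K : Type*) [Semiring K] {R V : Type*} [AddCommMonoid R] [Module K R]
    [AddCommMonoid V] [Module K V] (F : List R → V) : Prop where
  map_add : ∀ (p s : List R) (a b : R), F (p ++ (a + b) :: s) = F (p ++ a :: s) + F (p ++ b :: s)
  map_smul : ∀ (p s : List R) (c : K) (a : R), F (p ++ (c • a) :: s) = c • F (p ++ a :: s)

namespace IsWordMultilinear

variable {K : Type*} [Semiring K] {R V : Type*} [AddCommMonoid R] [Module K R]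
  [AddCommMonoid V] [Module K V] {F : List R → V}

theorem comp_cons (hF : IsWordMultilinear K F) (a : R) :
    IsWordMultilinear K fun w => F (a :: w) :=
  ⟨fun p => hF.map_add (a :: p), fun p => hF.map_smul (a :: p)⟩

theorem map_eq_zero_of_mem (hF : IsWordMultilinear K F) {w : List R} (hw : 0 ∈ w) : F w = 0 := by
  obtain ⟨p, s, rfl⟩ := List.append_of_mem hw
  simpa using hF.map_smul p s 0 0

/-- The linear map `a ↦ F (a w)` of the first letter. -/
def consLinearMap (hF : IsWordMultilinear K F) (w : List R) : R →ₗ[K] V where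
  toFun a := F (a :: w)
  map_add' := hF.map_add [] w
  map_smul' := hF.map_smul [] w

end IsWordMultilinear

theorem isWordMultilinear_wd (K : Type*) [Field K] {R : Type*} [AddCommGroup R] [Module K R] :
    IsWordMultilinear K (wd K : List R → TensorAlgebra K R) where
  map_add p s a b := by simp [wd, mul_add, add_mul]
  map_smul p s c a := by simp [wd]

section Functoriality

open Finsupp (linearCombination linearCombination_apply linearCombination_mapDomain)

variable {K : Type*} [Field K] {R S V : Type*} [AddCommGroup S] [Module K S]
  [AddCommMonoid V] [Module K V]
  (φ : PTree R → S) {F : List S → V}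

theorem linearCombination_wordOf (hF : IsWordMultilinear K F) (l : List (TreeMod K R)) :
    linearCombination K (fun g : Forest R => F (g.map φ)) (wordOf l) =
      F (l.map (linearCombination K φ)) := by
  induction l generalizing F with
  | nil => simp [wordOf]
  | cons a l ih =>
    have hletter : ∀ t : PTree R,
        linearCombination K (fun g : Forest R => F (g.map φ))
          ((wordOf l).mapDomain (List.cons t)) =
          hF.consLinearMap (l.map (linearCombination K φ)) (φ t) := by
      intro t
      rw [linearCombination_mapDomain]
      exact ih (hF.comp_cons (φ t))
    change _ = hF.consLinearMap (l.map (linearCombination K φ)) (linearCombination K φ a)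
    rw [wordOf, linearCombination_apply K a, map_finsuppSum, map_finsuppSum]
    simp only [map_smul, hletter]

variable {M : S → List S → S} {Mh : PTree R → Forest R → TreeMod K R}

theorem linearCombination_MextF {X : Forest R}
    (hX : ∀ t ∈ X, ∀ f, linearCombination K φ (Mh t f) = M (φ t) (f.map φ)) (Y : Forest R) :
    linearCombination K φ (MextF Mh X Y) = Mext M (X.map φ) (Y.map φ) := by
  rcases X with _ | ⟨x, _ | ⟨x', X⟩⟩
  · rcases Y with _ | ⟨y, _ | ⟨y', Y⟩⟩ <;> simp [MextF, Mext]
  · simpa [MextF, Mext] using hX x List.mem_cons_self Y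
  · simp [MextF, Mext]

theorem map_linearCombination_zipWith_MextF {Xs : List (Forest R)}
    (hXs : ∀ t ∈ Xs.flatten, ∀ f, linearCombination K φ (Mh t f) = M (φ t) (f.map φ))
    (Ys : List (Forest R)) :
    (List.zipWith (MextF Mh) Xs Ys).map (linearCombination K φ) =
      List.zipWith (Mext M) (Xs.map (List.map φ)) (Ys.map (List.map φ)) := by
  induction Xs generalizing Ys with
  | nil => simp
  | cons X Xs ih =>
    simp only [List.flatten_cons, List.mem_append] at hXs
    cases Ys with
    | nil => simp
    | cons Y Ys =>
      simp [linearCombination_MextF φ (fun t ht => hXs t (.inl ht)) Y,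
        ih (fun t ht => hXs t (.inr ht)) Ys]

theorem linearCombination_starRHS (hF : IsWordMultilinear K F) {X : Forest R}
    (hX : ∀ t ∈ X, ∀ f, linearCombination K φ (Mh t f) = M (φ t) (f.map φ)) (Y : Forest R) :
    linearCombination K (fun g : Forest R => F (g.map φ)) (starRHS Mh X Y) =
      ((starWords M (X.map φ) (Y.map φ)).map F).sum := by
  by_cases h : X = [] ∧ Y = []
  · obtain ⟨rfl, rfl⟩ := h
    simp [starWords, starRHS]
  · rw [starRHS.eq_2 _ _ _ fun h₁ h₂ => h ⟨h₁, h₂⟩,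
      starWords.eq_2 _ _ _ (by simpa using h), map_list_sum]
    simp only [List.length_map, sum_map_flatMap, splitsN_map, List.map_map, Function.comp_def]
    refine congrArg _ (List.map_congr_left fun k _ => congrArg _ (List.map_congr_left ?_))
    intro Xs hXs
    rw [← flatten_eq_of_mem_splitsN hXs] at hX
    simp only [linearCombination_wordOf φ hF, map_linearCombination_zipWith_MextF φ hX]

end Functoriality

@[elab_as_elim]
theorem PTree.induction_on_children {R : Type*} {motive : PTree R → Prop}
    (node : ∀ x ts, (∀ t ∈ ts, motive t) → motive (.node x ts)) : ∀ t, motive t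
  | .node x ts => node x ts fun t _ => induction_on_children node t

section TreeEvaluation

theorem muT_Bplus {R : Type*} (M : R → List R → R) (x : R) (f : Forest R) :
    muT M (Bplus x f) = M x (f.map (muT M)) := by
  simp [Bplus, muT]

variable {K : Type*} [Field K] {R : Type*} [AddCommGroup R] [Module K R] {M : R → List R → R}
  {Mh : PTree R → Forest R → TreeMod K R} {starT : Forest R → Forest R → ForestMod K R}

theorem linearCombination_muT_brace (hM : ∀ x, IsWordMultilinear K (M x)) (hbrace : BraceRel M)
    (h : IsTreeBrace Mh starT) (t : PTree R) (f : Forest R) :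
    Finsupp.linearCombination K (muT M) (Mh t f) = M (muT M t) (f.map (muT M)) := by
  induction t using PTree.induction_on_children generalizing f with
  | node x ts ih =>
    calc Finsupp.linearCombination K (muT M) (Mh (Bplus x ts) f)
        = Finsupp.linearCombination K (fun g : Forest R => M x (g.map (muT M)))
            (starRHS Mh ts f) := by
          simp only [h.1, h.2, Finsupp.linearCombination_mapDomain, Function.comp_def, muT_Bplus]
      _ = ((starWords M (ts.map (muT M)) (f.map (muT M))).map (M x)).sum :=
          linearCombination_starRHS (muT M) (hM x) ih f
      _ = braceSum M (M x) (ts.map (muT M)) (f.map (muT M)) :=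
          sum_starWords_eq_braceSum M (fun _ => (hM x).map_eq_zero_of_mem) _ _
      _ = M (M x (ts.map (muT M))) (f.map (muT M)) := (hbrace _ _ _).symm
      _ = M (muT M (Bplus x ts)) (f.map (muT M)) := by rw [muT_Bplus]

end TreeEvaluation

theorem mu_intertwines_star_general
    (K : Type*) [Field K] {R : Type*} [AddCommGroup R] [Module K R] {M : R → List R → R}
    (hM : ∀ x, IsWordMultilinear K (M x)) (hbrace : BraceRel M)
    {Mh : PTree R → Forest R → TreeMod K R} {starT : Forest R → Forest R → ForestMod K R}
    (h : IsTreeBrace Mh starT) (f₁ f₂ : Forest R) :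
    ((starT f₁ f₂).sum fun g c => c • wd K (g.map (muT M))) =
      starW K M (f₁.map (muT M)) (f₂.map (muT M)) := by
  rw [h.2]
  exact linearCombination_starRHS (muT M) (isWordMultilinear_wd K)
    (fun t _ => linearCombination_muT_brace hM hbrace h t) f₂

/-- Let `R` be a brace algebra and `μ : T(R^𝒯) → T(R)` the map
defined by `μ(1) = 1`, `μ(t₁⋯tₙ) = μ(t₁)⋯μ(tₙ)`, and
`μ(B₊ˣ(s₁⋯s_q)) = M_{1q}(x; μ(s₁)⋯μ(s_q))`.  Then `μ` intertwines the
Loday–Ronco products: `μ(f₁ ⋆ f₂) = μ(f₁) ⋆ μ(f₂)` for all decorated forests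
`f₁, f₂ ∈ T(R^𝒯)`, where on the left `⋆` is the product of `T(R^𝒯)` induced by
the recursive brace operation on decorated trees and on the right `⋆` is the
product of `T(R)` induced by the brace structure of `R`. -/
theorem mu_intertwines_star
    (K : Type*) [Field K] {R : Type*} [AddCommGroup R] [Module K R]
    (M : R → List R → R)
    (hM0 : ∀ x : R, M x [] = x)
    (hadd₁ : ∀ (a b : R) (ys : List R), M (a + b) ys = M a ys + M b ys)
    (hsmul₁ : ∀ (c : K) (a : R) (ys : List R), M (c • a) ys = c • M a ys)
    (hadd₂ : ∀ (x : R) (p s : List R) (a b : R),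
      M x (p ++ (a + b) :: s) = M x (p ++ a :: s) + M x (p ++ b :: s))
    (hsmul₂ : ∀ (x : R) (p s : List R) (c : K) (a : R),
      M x (p ++ (c • a) :: s) = c • M x (p ++ a :: s))
    (hbrace : BraceRel M)
    (Mh : PTree R → Forest R → TreeMod K R)
    (starT : Forest R → Forest R → ForestMod K R)
    (h : IsTreeBrace Mh starT) :
    ∀ f₁ f₂ : Forest R,
      ((starT f₁ f₂).sum fun g c => c • wd K (g.map (muT M))) =
        starW K M (f₁.map (muT M)) (f₂.map (muT M)) :=
  mu_intertwines_star_general K (fun x => ⟨hadd₂ x, hsmul₂ x⟩) hbrace h
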